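/- arXiv:2306.09137 — 2 statements merged into one kernel-verified Lean document; each statement's English description precedes it below -/
import Mathlib

section
/- Let n be a finite type and let A, B be n × n matrices over ℂ with B invertible (IsUnit B.det). Then the matrix-valued function k ↦ (A + (k:ℂ) • B)⁻¹ − (k:ℂ)⁻¹ • B⁻¹ of a real variable k is O(k⁻²) as k → +∞ along atTop on ℝ (with respect to any fixed norm on the space of matrices). -/
open Filter Matrix Asymptotics

attribute [local instance] Matrix.normedAddCommGroup

/-!
With `M k = B + k⁻¹ • A` we have `A + k • B = k • M k`, and `M k → B`. Inversion is continuous at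
the invertible matrix `B`, so `(M k)⁻¹ → B⁻¹`, and the resolvent identity
`(M k)⁻¹ - B⁻¹ = -k⁻¹ • ((M k)⁻¹ * A * B⁻¹)` gives
`(A + k • B)⁻¹ - k⁻¹ • B⁻¹ = -k⁻² • ((M k)⁻¹ * A * B⁻¹)`, where the matrix on the right converges
and is therefore bounded.
-/

/-- The exact remainder in the expansion of `(A + z • B)⁻¹` around `z = ∞`. -/
lemma inv_add_smul_sub_inv_smul_eq {n : Type*} [Fintype n] [DecidableEq n]
    (A B : Matrix n n ℂ) (hB : IsUnit B.det) {z : ℂ} (hz : z ≠ 0)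
    (hM : IsUnit (B + z⁻¹ • A).det) :
    (A + z • B)⁻¹ - z⁻¹ • B⁻¹ = (z ^ 2)⁻¹ • -((B + z⁻¹ • A)⁻¹ * A * B⁻¹) := by
  have hinv : (A + z • B)⁻¹ = z⁻¹ • (B + z⁻¹ • A)⁻¹ := by
    apply Matrix.inv_eq_left_inv
    have : A + z • B = z • (B + z⁻¹ • A) := by
      rw [smul_add, smul_smul, mul_inv_cancel₀ hz, one_smul, add_comm]
    rw [this, Matrix.smul_mul, Matrix.mul_smul, Matrix.nonsing_inv_mul _ hM, smul_smul,
      inv_mul_cancel₀ hz, one_smul]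
  have hres : (B + z⁻¹ • A)⁻¹ - B⁻¹ = -(z⁻¹ • ((B + z⁻¹ • A)⁻¹ * A * B⁻¹)) := by
    have h : (B + z⁻¹ • A)⁻¹ * (B - (B + z⁻¹ • A)) * B⁻¹ = (B + z⁻¹ • A)⁻¹ - B⁻¹ := by
      rw [mul_sub, sub_mul, Matrix.nonsing_inv_mul _ hM, mul_assoc,
        Matrix.mul_nonsing_inv _ hB, mul_one, one_mul]
    rw [← h, sub_add_cancel_left, mul_neg, neg_mul, Matrix.mul_smul, Matrix.smul_mul]
  rw [hinv, ← smul_sub, hres, smul_neg, smul_neg, smul_smul, sq, mul_inv]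

/-- If `B` is an invertible complex matrix, then
`k ↦ (A + k • B)⁻¹ - k⁻¹ • B⁻¹` is `O(k⁻²)` as the real parameter `k → +∞`. -/
theorem inv_add_smul_sub_inv_smul_isBigO_inv_sq
    {n : Type*} [Fintype n] [DecidableEq n]
    (A B : Matrix n n ℂ) (hB : IsUnit B.det) :
    (fun k : ℝ => (A + (k : ℂ) • B)⁻¹ - (k : ℂ)⁻¹ • B⁻¹)
      =O[atTop] fun k : ℝ => (k ^ 2)⁻¹ := by
  let _ : NormedSpace ℂ (Matrix n n ℂ) := Matrix.normedSpace
  have ht : Tendsto (fun k : ℝ => (k : ℂ)⁻¹) atTop (nhds 0) := by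
    have := (Complex.continuous_ofReal.tendsto 0).comp tendsto_inv_atTop_zero
    simpa [Function.comp_def] using this
  have hM : Tendsto (fun k : ℝ => B + (k : ℂ)⁻¹ • A) atTop (nhds B) := by
    have hc : Continuous fun z : ℂ => B + z • A := by fun_prop
    simpa [Function.comp_def] using (hc.tendsto 0).comp ht
  have hdet : ∀ᶠ k : ℝ in atTop, IsUnit (B + (k : ℂ)⁻¹ • A).det := by
    have hc : Continuous fun X : Matrix n n ℂ => X.det := continuous_id.matrix_det
    filter_upwards [((hc.tendsto B).comp hM).eventually_ne hB.ne_zero] with k hk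
    exact isUnit_iff_ne_zero.mpr hk
  have hinv : Tendsto (fun k : ℝ => (B + (k : ℂ)⁻¹ • A)⁻¹) atTop (nhds B⁻¹) := by
    refine (continuousAt_matrix_inv B ?_).tendsto.comp hM
    rw [Ring.inverse_eq_inv']
    exact continuousAt_inv₀ hB.ne_zero
  have hG : Tendsto (fun k : ℝ => -((B + (k : ℂ)⁻¹ • A)⁻¹ * A * B⁻¹)) atTop
      (nhds (-(B⁻¹ * A * B⁻¹))) := by
    have hc : Continuous fun X : Matrix n n ℂ => -(X * A * B⁻¹) :=
      ((continuous_id.matrix_mul continuous_const).matrix_mul continuous_const).neg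
    exact (hc.tendsto _).comp hinv
  have hsq : (fun k : ℝ => ((k : ℂ) ^ 2)⁻¹) =O[atTop] fun k : ℝ => (k ^ 2)⁻¹ :=
    IsBigO.of_norm_le fun k => by simp
  have hO := hsq.smul (hG.isBigO_one ℝ)
  simp only [smul_eq_mul, mul_one] at hO
  refine hO.congr' ?_ EventuallyEq.rfl
  filter_upwards [hdet, eventually_ne_atTop 0] with k hk hk0
  exact (inv_add_smul_sub_inv_smul_eq A B hB (Complex.ofReal_ne_zero.mpr hk0) hk).symm
end

section
/- Let m, n be finite types, let C be an invertible m × m complex matrix (IsUnit C.det), let B be an invertible n × n complex matrix (IsUnit B.det), let A be an arbitrary n × n complex matrix, and let M (m × m) and N (n × n) be arbitrary complex matrices. Then the ℂ-valued function k ↦ trace( (fromBlocks C 0 0 (A + (k:ℂ) • B))⁻¹ * fromBlocks M 0 0 N ) − ( trace(C⁻¹ * M) + (k:ℂ)⁻¹ * trace(B⁻¹ * N) ) of a real variable k is O(k⁻²) as k → +∞ along atTop on ℝ. -/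
open Filter Matrix Asymptotics

/-!
With `t = k⁻¹`, one has `A + k • B = k • (t • A + B)`, so the horizontal block of the inverse is
`t • (t • A + B)⁻¹`. The resolvent-type identity
`(t • A + B)⁻¹ - B⁻¹ = -t • (t • A + B)⁻¹ * A * B⁻¹` (`inv_smul_add_eq`) then shows that the
remainder is exactly `-k⁻² * trace ((t • A + B)⁻¹ * A * B⁻¹ * N)`, and the trace stays bounded as
`t → 0` because `t ↦ (t • A + B)⁻¹` is continuous at `0` (`continuousAt_inv_smul_add`), `B` being
invertible. The vertical block contributes `trace (C⁻¹ * M)` with no error.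
-/

theorem trace_fromBlocks_eq {m n : Type*} [Fintype m] [Fintype n]
    (P : Matrix m m ℂ) (Q : Matrix m n ℂ) (R : Matrix n m ℂ) (S : Matrix n n ℂ) :
    (fromBlocks P Q R S).trace = P.trace + S.trace := by
  simp [Matrix.trace]

section
variable {n : Type*} [Fintype n] [DecidableEq n]

theorem continuousAt_inv_smul_add (A : Matrix n n ℂ) {B : Matrix n n ℂ} (hB : IsUnit B.det) :
    ContinuousAt (fun t : ℂ => (t • A + B)⁻¹) 0 := by
  have hc : Continuous fun t : ℂ => t • A + B := by fun_prop
  simp only [Matrix.inv_def, Ring.inverse_eq_inv']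
  refine ContinuousAt.smul (hc.matrix_det.continuousAt.inv₀ ?_) hc.matrix_adjugate.continuousAt
  simpa using hB.ne_zero

theorem inv_smul_add_eq {A B : Matrix n n ℂ} {t : ℂ} (hB : IsUnit B.det)
    (ht : IsUnit (t • A + B).det) :
    (t • A + B)⁻¹ = B⁻¹ - t • ((t • A + B)⁻¹ * A * B⁻¹) := by
  have h : (t • A + B)⁻¹ * (t • A + B) * B⁻¹ = B⁻¹ := by
    rw [Matrix.nonsing_inv_mul _ ht, Matrix.one_mul]
  rw [Matrix.mul_add, Matrix.add_mul, Matrix.mul_assoc _ B, Matrix.mul_nonsing_inv _ hB,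
    Matrix.mul_one, Matrix.mul_smul, Matrix.smul_mul] at h
  exact eq_sub_of_add_eq' h

end

/-- Block-diagonal adiabatic expansion of the contraction: with invertible vertical
block `C` and invertible `B`, the function
`k ↦ trace ((fromBlocks C 0 0 (A + k • B))⁻¹ * fromBlocks M 0 0 N)
      - (trace (C⁻¹ * M) + k⁻¹ * trace (B⁻¹ * N))`
is `O(k⁻²)` as the real parameter `k → +∞`. -/
theorem trace_blockDiagonal_inv_isBigO_inv_sq
    {m n : Type*} [Fintype m] [DecidableEq m] [Fintype n] [DecidableEq n]
    (C : Matrix m m ℂ) (hC : IsUnit C.det)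
    (B : Matrix n n ℂ) (hB : IsUnit B.det)
    (A : Matrix n n ℂ) (M : Matrix m m ℂ) (N : Matrix n n ℂ) :
    (fun k : ℝ =>
        ((fromBlocks C 0 0 (A + (k : ℂ) • B))⁻¹ * fromBlocks M 0 0 N).trace
          - ((C⁻¹ * M).trace + (k : ℂ)⁻¹ * (B⁻¹ * N).trace))
      =O[atTop] fun k : ℝ => (k ^ 2)⁻¹ := by
  have hlim : Tendsto (fun k : ℝ => (k : ℂ)⁻¹) atTop (nhds 0) := by
    simpa [Function.comp_def] using
      (Complex.continuous_ofReal.tendsto 0).comp tendsto_inv_atTop_zero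
  have hbdd : (fun k : ℝ => ((((k : ℂ)⁻¹ • A + B)⁻¹ * A * B⁻¹ * N).trace))
      =O[atTop] fun _ : ℝ => (1 : ℝ) := by
    have hL : Continuous fun X : Matrix n n ℂ => (X * A * B⁻¹ * N).trace :=
      (((continuous_id.matrix_mul continuous_const).matrix_mul
        continuous_const).matrix_mul continuous_const).matrix_trace
    have hG : Tendsto (fun k : ℝ => ((k : ℂ)⁻¹ • A + B)⁻¹) atTop (nhds ((0 : ℂ) • A + B)⁻¹) :=
      (continuousAt_inv_smul_add A hB).tendsto.comp hlim
    exact ((hL.tendsto _).comp hG).isBigO_one ℝ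
  have hdet : ∀ᶠ k : ℝ in atTop, IsUnit ((k : ℂ)⁻¹ • A + B).det := by
    have hc : Continuous fun t : ℂ => (t • A + B).det :=
      Continuous.matrix_det (by fun_prop)
    have h0 : ((0 : ℂ) • A + B).det ≠ 0 := by simpa using hB.ne_zero
    filter_upwards [((hc.tendsto 0).comp hlim).eventually_ne h0] with k hk
    exact hk.isUnit
  have hsq : (fun k : ℝ => -((k : ℂ) ^ 2)⁻¹) =O[atTop] fun k : ℝ => (k ^ 2)⁻¹ :=
    IsBigO.of_bound 1 (Eventually.of_forall fun k => by simp)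
  have hmul := hsq.mul hbdd
  simp only [mul_one] at hmul
  refine hmul.congr' ?_ EventuallyEq.rfl
  filter_upwards [hdet, eventually_ne_atTop 0] with k hk hk0
  have hkC : (k : ℂ) ≠ 0 := by exact_mod_cast hk0
  have hfac : A + (k : ℂ) • B = (k : ℂ) • ((k : ℂ)⁻¹ • A + B) := by
    rw [smul_add, smul_smul, mul_inv_cancel₀ hkC, one_smul]
  have hD : IsUnit (A + (k : ℂ) • B).det := by
    rw [hfac, Matrix.det_smul]
    exact (hkC.isUnit.pow _).mul hk
  have hinv : (A + (k : ℂ) • B)⁻¹ = (k : ℂ)⁻¹ • ((k : ℂ)⁻¹ • A + B)⁻¹ := by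
    rw [hfac]
    exact Matrix.inv_smul' (A := (k : ℂ)⁻¹ • A + B) (Units.mk0 (k : ℂ) hkC) hk
  have hiff : IsUnit C ↔ IsUnit (A + (k : ℂ) • B) :=
    iff_of_true ((Matrix.isUnit_iff_isUnit_det _).2 hC) ((Matrix.isUnit_iff_isUnit_det _).2 hD)
  have hexp : (((k : ℂ)⁻¹ • A + B)⁻¹ * N).trace = (B⁻¹ * N).trace
      - (k : ℂ)⁻¹ * (((k : ℂ)⁻¹ • A + B)⁻¹ * A * B⁻¹ * N).trace := by
    conv_lhs => rw [inv_smul_add_eq hB hk]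
    rw [Matrix.sub_mul, Matrix.smul_mul, Matrix.trace_sub, Matrix.trace_smul, smul_eq_mul]
  rw [Matrix.inv_fromBlocks_zero₁₂_of_isUnit_iff _ _ _ hiff, hinv, Matrix.fromBlocks_multiply]
  simp only [Matrix.mul_zero, Matrix.zero_mul, neg_zero, add_zero, zero_add,
    trace_fromBlocks_eq, Matrix.smul_mul, Matrix.trace_smul, smul_eq_mul, hexp]
  ring
end
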